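/- arXiv:1410.4315 — 2 statements merged into one kernel-verified Lean document; each statement's English description precedes it below -/
import Mathlib

section
/- Let n ∈ ℕ, σ ∈ {0,1}^n, and let μ_{j,m} be the Haar coefficients of the local discrepancy of the digit shifted Hammersley point set R_{n,σ} with N = 2^n points. If j = (j_1,j_2) ∈ ℕ_0^2 with j_1 ≥ n or j_2 ≥ n, then |μ_{j,m}| = 2^{−2(j_1+j_2+2)} for all m ∈ D_j. -/
open MeasureTheory

/-- The real value of a binary digit. -/
noncomputable def bval (b : Bool) : ℝ := if b then 1 else 0

/-- The two-dimensional digit shifted Hammersley point set with `2^n` points,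
indexed by the digit vectors `t : Fin n → Bool`.  The index `i : Fin n`
corresponds to the digit `t_{i+1}` of the paper. -/
noncomputable def hammersleyShifted (n : ℕ) (σ : Fin n → Bool) (t : Fin n → Bool) : ℝ × ℝ :=
  (∑ i : Fin n, bval (t i) / 2 ^ (n - i.val),
   ∑ i : Fin n, bval (t i != σ i) / 2 ^ (i.val + 1))

/-- Number of points of the (indexed) point set `P` lying in `[0,t₁) × [0,t₂)`. -/
noncomputable def countIn {ι : Type*} [Fintype ι] (P : ι → ℝ × ℝ) (t : ℝ × ℝ) : ℕ :=
  (Finset.univ.filter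
    (fun k => 0 ≤ (P k).1 ∧ (P k).1 < t.1 ∧ 0 ≤ (P k).2 ∧ (P k).2 < t.2)).card

/-- The local discrepancy `D_N(P,t) = A_N([0,t),P)/N - t₁t₂` of an indexed point set. -/
noncomputable def localDisc {ι : Type*} [Fintype ι] (P : ι → ℝ × ℝ) (t : ℝ × ℝ) : ℝ :=
  (countIn P t : ℝ) / (Fintype.card ι) - t.1 * t.2

/-- The `L_p`-discrepancy of an indexed point set. -/
noncomputable def LpDisc (p : ℝ) {ι : Type*} [Fintype ι] (P : ι → ℝ × ℝ) : ℝ :=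
  (∫ t in Set.Icc (0 : ℝ × ℝ) 1, |localDisc P t| ^ p) ^ (1 / p)

/-- One-dimensional `L∞`-normalized Haar function `h_{j,m}`, with `j ∈ ℤ`, `j = -1`
giving the indicator of `[0,1)` and `j ≥ 0` the usual Haar function on `I_{j,m}`. -/
noncomputable def haar1 (j : ℤ) (m : ℕ) (x : ℝ) : ℝ :=
  if j = -1 then (if 0 ≤ x ∧ x < 1 then 1 else 0)
  else if (2 * m : ℝ) / 2 ^ (j.toNat + 1) ≤ x ∧ x < (2 * m + 1 : ℝ) / 2 ^ (j.toNat + 1) then 1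
  else if (2 * m + 1 : ℝ) / 2 ^ (j.toNat + 1) ≤ x ∧ x < (2 * m + 2 : ℝ) / 2 ^ (j.toNat + 1) then -1
  else 0

/-- Two-dimensional (tensor product) Haar function. -/
noncomputable def haar2 (j : ℤ × ℤ) (m : ℕ × ℕ) (x : ℝ × ℝ) : ℝ :=
  haar1 j.1 m.1 x.1 * haar1 j.2 m.2 x.2

/-- One-dimensional dyadic interval `I_{j,m}` (with `I_{-1,0} = [0,1)`). -/
noncomputable def dyadicI (j : ℤ) (m : ℕ) : Set ℝ :=
  if j = -1 then Set.Ico (0 : ℝ) 1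
  else Set.Ico ((m : ℝ) / 2 ^ j.toNat) ((m + 1 : ℝ) / 2 ^ j.toNat)

/-- Haar coefficient `μ_{j,m} = ∫_{[0,1]²} D_N(P,t) h_{j,m}(t) dt` of the local
discrepancy of an indexed point set. -/
noncomputable def haarCoeff {ι : Type*} [Fintype ι] (P : ι → ℝ × ℝ) (j : ℤ × ℤ) (m : ℕ × ℕ) : ℝ :=
  ∫ t in Set.Icc (0 : ℝ × ℝ) 1, localDisc P t * haar2 j m t

/-- Number of zero components of the shift `σ`. -/
noncomputable def zeroCount {n : ℕ} (σ : Fin n → Bool) : ℕ :=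
  (Finset.univ.filter (fun j => σ j = false)).card

/-- The symmetrized digit shifted Hammersley point set `R_{n,σ} ∪ R_{n,σ⊕1}`
with `2^(n+1)` points, indexed by `Bool × (Fin n → Bool)`. -/
noncomputable def hammersleySym (n : ℕ) (σ : Fin n → Bool) :
    Bool × (Fin n → Bool) → ℝ × ℝ :=
  fun bt => if bt.1 then hammersleyShifted n (fun i => !(σ i)) bt.2
            else hammersleyShifted n σ bt.2

/-- The multiset `R_{n,σ} ∪ {(x, 1-y) : (x,y) ∈ R_{n,σ}}` with `2^(n+1)` points
(counted with multiplicity), indexed by `Bool × (Fin n → Bool)`. -/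
noncomputable def hammersleySymTilde (n : ℕ) (σ : Fin n → Bool) :
    Bool × (Fin n → Bool) → ℝ × ℝ :=
  fun bt => if bt.1 then ((hammersleyShifted n σ bt.2).1, 1 - (hammersleyShifted n σ bt.2).2)
            else hammersleyShifted n σ bt.2

/-!
A function that is constant on the interior of a dyadic interval is orthogonal to the corresponding
Haar function. The counting part of the local discrepancy is a sum over the points `(x, y)` of
products `1_{[0,t₁)}(x) 1_{[0,t₂)}(y)`, and `t ↦ 1_{[0,t)}(z)` jumps only at `z`; hence a point
outside the interior of `I_{j,m}` contributes nothing to `μ_{j,m}`, and if there is no point inside,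
`μ_{j,m}` is the Haar coefficient of `-t₁t₂`. The coordinates of a Hammersley point are multiples of
`2^{-n}`, so they never lie in the interior of a dyadic interval of level at least `n`.
-/

lemma haar1_natCast (j m : ℕ) :
    haar1 j m =
      (Set.Ico ((2 * m : ℝ) / 2 ^ (j + 1)) ((2 * m + 1 : ℝ) / 2 ^ (j + 1))).indicator 1 -
      (Set.Ico ((2 * m + 1 : ℝ) / 2 ^ (j + 1)) ((2 * m + 2 : ℝ) / 2 ^ (j + 1))).indicator 1 := by
  ext x
  have hj : (j : ℤ) ≠ -1 := by lia
  simp only [haar1, if_neg hj, Int.toNat_natCast, Pi.sub_apply, Set.indicator, Set.mem_Ico,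
    Pi.one_apply]
  grind

lemma measurable_haar1 (j : ℤ) (m : ℕ) : Measurable (haar1 j m) := by
  unfold haar1
  split_ifs
  · exact Measurable.ite measurableSet_Ico measurable_const measurable_const
  · exact Measurable.ite measurableSet_Ico measurable_const
      (Measurable.ite measurableSet_Ico measurable_const measurable_const)

lemma abs_haar1_le_one (j : ℤ) (m : ℕ) (x : ℝ) : |haar1 j m x| ≤ 1 := by
  unfold haar1
  split_ifs <;> norm_num

lemma integrable_mul_haar1 {μ : Measure ℝ} {f : ℝ → ℝ} (hf : Integrable f μ) (j : ℤ) (m : ℕ) :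
    Integrable (fun x ↦ f x * haar1 j m x) μ :=
  hf.mul_bdd (c := 1) (measurable_haar1 j m).aestronglyMeasurable
    (ae_of_all _ (abs_haar1_le_one j m))

lemma setIntegral_mul_haar1 {j m : ℕ} (hm : m < 2 ^ j) {f : ℝ → ℝ}
    (hf : IntegrableOn f (Set.Icc 0 1)) :
    ∫ x in Set.Icc (0 : ℝ) 1, f x * haar1 j m x =
      (∫ x in ((2 * m : ℝ) / 2 ^ (j + 1))..((2 * m + 1 : ℝ) / 2 ^ (j + 1)), f x) -
      ∫ x in ((2 * m + 1 : ℝ) / 2 ^ (j + 1))..((2 * m + 2 : ℝ) / 2 ^ (j + 1)), f x := by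
  have left_nonneg : (0 : ℝ) ≤ 2 * m / 2 ^ (j + 1) := by positivity
  have left_le_mid : (2 * m : ℝ) / 2 ^ (j + 1) ≤ (2 * m + 1) / 2 ^ (j + 1) := by
    gcongr
    linarith
  have mid_le_right : (2 * m + 1 : ℝ) / 2 ^ (j + 1) ≤ (2 * m + 2) / 2 ^ (j + 1) := by
    gcongr
    norm_num
  have right_le_one : (2 * m + 2 : ℝ) / 2 ^ (j + 1) ≤ 1 := by
    rw [div_le_one (by positivity), pow_succ]
    have : (m + 1 : ℝ) ≤ 2 ^ j := by exact_mod_cast hm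
    linarith
  simp only [haar1_natCast, Pi.sub_apply, mul_sub, ← Set.indicator_mul_right, Pi.one_apply, mul_one]
  rw [integral_sub (hf.indicator measurableSet_Ico) (hf.indicator measurableSet_Ico),
    setIntegral_indicator measurableSet_Ico, setIntegral_indicator measurableSet_Ico,
    Set.inter_eq_right.mpr, Set.inter_eq_right.mpr, integral_Ico_eq_integral_Ioc,
    integral_Ico_eq_integral_Ioc, intervalIntegral.integral_of_le left_le_mid,
    intervalIntegral.integral_of_le mid_le_right]
  · exact fun x hx ↦ ⟨by linarith [hx.1], by linarith [hx.2]⟩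
  · exact fun x hx ↦ ⟨by linarith [hx.1], by linarith [hx.2]⟩

lemma setIntegral_id_mul_haar1 {j m : ℕ} (hm : m < 2 ^ j) :
    ∫ x in Set.Icc (0 : ℝ) 1, x * haar1 j m x = -(1 / 2 ^ (2 * (j + 1))) := by
  rw [setIntegral_mul_haar1 hm (f := fun x ↦ x) continuous_id.integrableOn_Icc, integral_id,
    integral_id, mul_comm 2 (j + 1), pow_mul]
  field_simp
  ring

lemma dyadicI_natCast (j m : ℕ) :
    dyadicI j m = Set.Ico ((m : ℝ) / 2 ^ j) ((m + 1 : ℝ) / 2 ^ j) := by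
  have hj : (j : ℤ) ≠ -1 := by lia
  rw [dyadicI, if_neg hj, Int.toNat_natCast]

lemma interior_dyadicI_natCast (j m : ℕ) :
    interior (dyadicI j m) = Set.Ioo ((m : ℝ) / 2 ^ j) ((m + 1 : ℝ) / 2 ^ j) := by
  rw [dyadicI_natCast, interior_Ico]

lemma haar1_eq_zero_of_notMem_dyadicI {j : ℤ} {m : ℕ} {x : ℝ} (hx : x ∉ dyadicI j m) :
    haar1 j m x = 0 := by
  have h_left : (2 * m : ℝ) / 2 ^ (j.toNat + 1) = m / 2 ^ j.toNat := by
    field_simp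
    ring
  have h_right : (2 * m + 2 : ℝ) / 2 ^ (j.toNat + 1) = (m + 1) / 2 ^ j.toNat := by
    field_simp
    ring
  have h_mid : (2 * m + 1 : ℝ) / 2 ^ (j.toNat + 1) ∈
      Set.Icc ((2 * m : ℝ) / 2 ^ (j.toNat + 1)) ((2 * m + 2) / 2 ^ (j.toNat + 1)) := by
    constructor <;> gcongr <;> linarith
  rw [h_left, h_right] at h_mid
  simp only [haar1, h_left, h_right]
  simp only [dyadicI] at hx
  grind

lemma setIntegral_mul_haar1_eq_zero_of_eqOn_const {j m : ℕ} (hm : m < 2 ^ j) {f : ℝ → ℝ} {c : ℝ}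
    (hf : Set.EqOn f (fun _ ↦ c) (interior (dyadicI j m))) :
    ∫ x in Set.Icc (0 : ℝ) 1, f x * haar1 j m x = 0 := by
  have ae_eq_const : ∀ᵐ x : ℝ, f x * haar1 j m x = c * haar1 j m x := by
    filter_upwards [volume.ae_ne ((m : ℝ) / 2 ^ j)] with x hx
    by_cases hmem : x ∈ interior (dyadicI j m)
    · rw [hf hmem]
    · have x_notMem : x ∉ dyadicI j m := by
        rw [interior_dyadicI_natCast] at hmem
        rw [dyadicI_natCast]
        exact fun h ↦ hmem ⟨h.1.lt_of_ne hx.symm, h.2⟩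
      simp only [haar1_eq_zero_of_notMem_dyadicI x_notMem, mul_zero]
  rw [setIntegral_congr_ae measurableSet_Icc (ae_eq_const.mono fun _ hx _ ↦ hx),
    setIntegral_mul_haar1 hm continuous_const.integrableOn_Icc]
  simp only [intervalIntegral.integral_const, smul_eq_mul]
  ring

section Discrepancy

/-- The indicator `1_{[0,t)}(z)`, viewed as a function of the endpoint `t` for a fixed point `z`.
Products of two of these are the contributions of single points to the counting function. -/
noncomputable def anchoredIndicator (z t : ℝ) : ℝ := (Set.Ico 0 t).indicator 1 z

lemma measurable_anchoredIndicator (z : ℝ) : Measurable (anchoredIndicator z) := by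
  have measurableSet_one : MeasurableSet {t : ℝ | 0 ≤ z ∧ z < t} :=
    (MeasurableSet.const _).inter measurableSet_Ioi
  exact (measurable_const (a := (1 : ℝ))).indicator measurableSet_one

lemma integrable_anchoredIndicator {μ : Measure ℝ} [IsFiniteMeasure μ] (z : ℝ) :
    Integrable (anchoredIndicator z) μ := by
  refine .of_bound (measurable_anchoredIndicator z).aestronglyMeasurable 1 (ae_of_all _ fun t ↦ ?_)
  simp only [anchoredIndicator, Set.indicator]
  split_ifs <;> norm_num

lemma exists_eqOn_const_anchoredIndicator {a b z : ℝ} (hz : z ∉ Set.Ioo a b) :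
    ∃ c, Set.EqOn (anchoredIndicator z) (fun _ ↦ c) (Set.Ioo a b) := by
  rcases le_or_gt z a with hza | haz
  · refine ⟨(Set.Ici 0).indicator 1 z, fun t ht ↦ ?_⟩
    simp [anchoredIndicator, Set.indicator, hza.trans_lt ht.1]
  · have hbz : b ≤ z := by
      by_contra! hzb
      exact hz ⟨haz, hzb⟩
    refine ⟨0, fun t ht ↦ ?_⟩
    simp [anchoredIndicator, (ht.2.trans_le hbz).le]

lemma setIntegral_anchoredIndicator_mul_haar1_eq_zero {j m : ℕ} (hm : m < 2 ^ j) {z : ℝ}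
    (hz : z ∉ interior (dyadicI j m)) :
    ∫ t in Set.Icc (0 : ℝ) 1, anchoredIndicator z t * haar1 j m t = 0 := by
  obtain ⟨c, hc⟩ : ∃ c, Set.EqOn (anchoredIndicator z) (fun _ ↦ c) (interior (dyadicI j m)) := by
    rw [interior_dyadicI_natCast] at hz ⊢
    exact exists_eqOn_const_anchoredIndicator hz
  exact setIntegral_mul_haar1_eq_zero_of_eqOn_const hm hc

variable {ι : Type*} [Fintype ι]

lemma countIn_eq_sum_anchoredIndicator (P : ι → ℝ × ℝ) (t : ℝ × ℝ) :
    (countIn P t : ℝ) =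
      ∑ k, anchoredIndicator (P k).1 t.1 * anchoredIndicator (P k).2 t.2 := by
  rw [countIn, Finset.natCast_card_filter]
  refine Finset.sum_congr rfl fun k _ ↦ ?_
  simp only [anchoredIndicator, Set.indicator, Set.mem_Ico, Pi.one_apply]
  grind

lemma localDisc_mul_haar2 (P : ι → ℝ × ℝ) (j : ℤ × ℤ) (m : ℕ × ℕ) (t : ℝ × ℝ) :
    localDisc P t * haar2 j m t =
      (∑ k, (anchoredIndicator (P k).1 t.1 * haar1 j.1 m.1 t.1) *
        (anchoredIndicator (P k).2 t.2 * haar1 j.2 m.2 t.2)) / Fintype.card ι -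
      (t.1 * haar1 j.1 m.1 t.1) * (t.2 * haar1 j.2 m.2 t.2) := by
  simp only [mul_mul_mul_comm _ (haar1 j.1 m.1 t.1), ← Finset.sum_mul,
    ← countIn_eq_sum_anchoredIndicator, localDisc, haar2]
  ring

lemma volume_restrict_Icc_prod (a b : ℝ × ℝ) :
    (volume : Measure (ℝ × ℝ)).restrict (Set.Icc a b) =
      (volume.restrict (Set.Icc a.1 b.1)).prod (volume.restrict (Set.Icc a.2 b.2)) := by
  rw [Measure.prod_restrict, ← Measure.volume_eq_prod, Set.Icc_prod_eq]

lemma haarCoeff_eq_sum_sub (P : ι → ℝ × ℝ) (j : ℤ × ℤ) (m : ℕ × ℕ) :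
    haarCoeff P j m =
      (∑ k, (∫ x in Set.Icc (0 : ℝ) 1, anchoredIndicator (P k).1 x * haar1 j.1 m.1 x) *
        ∫ y in Set.Icc (0 : ℝ) 1, anchoredIndicator (P k).2 y * haar1 j.2 m.2 y) /
          Fintype.card ι -
      (∫ x in Set.Icc (0 : ℝ) 1, x * haar1 j.1 m.1 x) *
        ∫ y in Set.Icc (0 : ℝ) 1, y * haar1 j.2 m.2 y := by
  have integrable_id : IntegrableOn (fun x : ℝ ↦ x) (Set.Icc 0 1) := continuous_id.integrableOn_Icc
  have integrable_count (k : ι) :=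
    (integrable_mul_haar1 (integrable_anchoredIndicator (P k).1) j.1 m.1).mul_prod
      (integrable_mul_haar1 (integrable_anchoredIndicator (P k).2) j.2 m.2)
      (μ := volume.restrict (Set.Icc (0 : ℝ) 1)) (ν := volume.restrict (Set.Icc (0 : ℝ) 1))
  have integrable_volume := (integrable_mul_haar1 integrable_id j.1 m.1).mul_prod
    (integrable_mul_haar1 integrable_id j.2 m.2)
  simp only [haarCoeff, localDisc_mul_haar2, volume_restrict_Icc_prod, Prod.fst_zero, Prod.fst_one,
    Prod.snd_zero, Prod.snd_one]
  rw [integral_sub ((integrable_finsetSum _ fun k _ ↦ integrable_count k).div_const _)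
    integrable_volume, integral_div, integral_finsetSum _ fun k _ ↦ integrable_count k]
  congr 1
  · congr 1
    exact Finset.sum_congr rfl fun k _ ↦ integral_prod_mul
      (fun x ↦ anchoredIndicator (P k).1 x * haar1 j.1 m.1 x)
      (fun y ↦ anchoredIndicator (P k).2 y * haar1 j.2 m.2 y)
  · exact integral_prod_mul (fun x ↦ x * haar1 j.1 m.1 x) (fun y ↦ y * haar1 j.2 m.2 y)

theorem statement7_general [Nonempty ι] (P : ι → ℝ × ℝ) {j1 j2 m1 m2 : ℕ} (hm1 : m1 < 2 ^ j1)
    (hm2 : m2 < 2 ^ j2) (hP : ∀ k, P k ∉ interior (dyadicI j1 m1 ×ˢ dyadicI j2 m2)) :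
    haarCoeff P (j1, j2) (m1, m2) = -(1 / 2 ^ (2 * (j1 + j2 + 2))) := by
  have point_contribution (k : ι) :
      (∫ x in Set.Icc (0 : ℝ) 1, anchoredIndicator (P k).1 x * haar1 j1 m1 x) *
        ∫ y in Set.Icc (0 : ℝ) 1, anchoredIndicator (P k).2 y * haar1 j2 m2 y = 0 := by
    have hk := hP k
    rw [interior_prod_eq, Set.mem_prod, not_and_or] at hk
    rcases hk with hx | hy
    · rw [setIntegral_anchoredIndicator_mul_haar1_eq_zero hm1 hx, zero_mul]
    · rw [setIntegral_anchoredIndicator_mul_haar1_eq_zero hm2 hy, mul_zero]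
  rw [haarCoeff_eq_sum_sub, Finset.sum_eq_zero fun k _ ↦ point_contribution k,
    setIntegral_id_mul_haar1 hm1, setIntegral_id_mul_haar1 hm2]
  ring

end Discrepancy

lemma exists_sum_bval_div_two_pow_eq {ι : Type*} [Fintype ι] (d : ι → Bool) {e : ι → ℕ} {n : ℕ}
    (he : ∀ i, e i ≤ n) : ∃ k : ℤ, ∑ i, bval (d i) / 2 ^ e i = k / 2 ^ n := by
  refine ⟨∑ i, (if d i then 1 else 0) * 2 ^ (n - e i), ?_⟩
  push_cast
  rw [Finset.sum_div]
  refine Finset.sum_congr rfl fun i _ ↦ ?_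
  rw [bval, pow_sub₀ _ two_ne_zero (he i)]
  field_simp

lemma intCast_div_two_pow_notMem_interior_dyadicI (j m : ℕ) (k : ℤ) :
    (k : ℝ) / 2 ^ j ∉ interior (dyadicI j m) := by
  rw [interior_dyadicI_natCast, Set.mem_Ioo, div_lt_div_iff_of_pos_right (by positivity),
    div_lt_div_iff_of_pos_right (by positivity)]
  norm_cast
  lia

lemma sum_bval_div_two_pow_notMem_interior_dyadicI {ι : Type*} [Fintype ι] (d : ι → Bool)
    {e : ι → ℕ} {j : ℕ} (he : ∀ i, e i ≤ j) (m : ℕ) :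
    ∑ i, bval (d i) / 2 ^ e i ∉ interior (dyadicI j m) := by
  obtain ⟨k, hk⟩ := exists_sum_bval_div_two_pow_eq d he
  rw [hk]
  exact intCast_div_two_pow_notMem_interior_dyadicI j m k

lemma hammersleyShifted_notMem_interior_dyadicI {n : ℕ} (σ : Fin n → Bool) {j1 j2 : ℕ}
    (hj : n ≤ j1 ∨ n ≤ j2) (m1 m2 : ℕ) (t : Fin n → Bool) :
    hammersleyShifted n σ t ∉ interior (dyadicI j1 m1 ×ˢ dyadicI j2 m2) := by
  rw [interior_prod_eq, Set.mem_prod, not_and_or]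
  refine hj.imp (fun hj1 ↦ ?_) fun hj2 ↦ ?_
  · exact sum_bval_div_two_pow_notMem_interior_dyadicI t (fun i ↦ by lia) m1
  · exact sum_bval_div_two_pow_notMem_interior_dyadicI (fun i ↦ t i != σ i) (fun i ↦ by lia) m2

/-- Haar coefficients of the local discrepancy of `R_{n,σ}` for `j ∈ ℕ₀²`
with `j₁ ≥ n` or `j₂ ≥ n`: `|μ_{j,m}| = 2^{-2(j₁+j₂+2)}`. -/
theorem statement7 (n : ℕ) (hn : 0 < n) (σ : Fin n → Bool)
    (j1 j2 : ℕ) (hj : n ≤ j1 ∨ n ≤ j2)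
    (m1 m2 : ℕ) (hm1 : m1 < 2 ^ j1) (hm2 : m2 < 2 ^ j2) :
    |haarCoeff (hammersleyShifted n σ) ((j1 : ℤ), (j2 : ℤ)) (m1, m2)| =
      1 / 2 ^ (2 * (j1 + j2 + 2)) := by
  rw [statement7_general _ hm1 hm2 (hammersleyShifted_notMem_interior_dyadicI σ hj m1 m2), abs_neg,
    abs_of_nonneg (by positivity)]
end

section
/- Let n ∈ ℕ, σ ∈ {0,1}^n, and let a_n = #{j : σ_j = 0}. Then the Haar coefficient of the local discrepancy of the digit shifted Hammersley point set R_{n,σ} (with N = 2^n points) for j = (−1,−1), m = (0,0) satisfies μ_{(−1,−1),(0,0)} = ∫_{[0,1]^2} D_N(R_{n,σ},t) dt = 2^{−(n+3)}(2a_n + 4 − n) + 2^{−2(n+1)}. -/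
open MeasureTheory

/-!
Integrating the indicator of `[0, t)` over the upper corner `t` gives, for any points in the unit
square, `∫ D_N = N⁻¹ ∑ (1 - x) (1 - y) - 1/4`. In terms of the signs `s_i = (-1) ^ t_i` both
`1 - x` and `1 - y` are affine, with the same constant term `(1 + 2⁻ⁿ) / 2`; the coefficients of
`s_i` multiply to `(-1) ^ σ_i / 2 ^ (n + 3)`. Since the `s_i` are orthogonal over all digit
vectors, only these products and the squared constant survive, and `∑ (-1) ^ σ_i = 2 aₙ - n`.
-/

section HaarCoefficient

lemma haar2_neg_one_of_mem_Ico (m : ℕ × ℕ) {t : ℝ × ℝ}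
    (ht : t ∈ Set.Ico (0 : ℝ) 1 ×ˢ Set.Ico (0 : ℝ) 1) : haar2 (-1, -1) m t = 1 := by
  obtain ⟨⟨_, _⟩, _, _⟩ := ht
  simp [haar2, haar1, *]

lemma Icc_zero_one_ae_eq_Ico_prod_Ico :
    Set.Icc (0 : ℝ × ℝ) 1 =ᵐ[volume] Set.Ico (0 : ℝ) 1 ×ˢ Set.Ico (0 : ℝ) 1 := by
  rw [Set.Icc_prod_eq, Measure.volume_eq_prod]
  exact Measure.set_prod_ae_eq Ico_ae_eq_Icc.symm Ico_ae_eq_Icc.symm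

lemma haarCoeff_neg_one {ι : Type*} [Fintype ι] (P : ι → ℝ × ℝ) (m : ℕ × ℕ) :
    haarCoeff P (-1, -1) m = ∫ t in Set.Icc (0 : ℝ × ℝ) 1, localDisc P t := by
  rw [haarCoeff, setIntegral_congr_set Icc_zero_one_ae_eq_Ico_prod_Ico,
    setIntegral_congr_set Icc_zero_one_ae_eq_Ico_prod_Ico]
  refine setIntegral_congr_fun (measurableSet_Ico.prod measurableSet_Ico) fun t ht => ?_
  simp only [haar2_neg_one_of_mem_Ico m ht, mul_one]

end HaarCoefficient

section IntegralLocalDisc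

variable {ι : Type*} [Fintype ι] {P : ι → ℝ × ℝ}

lemma countIn_eq_sum_indicator (hP : ∀ k, 0 ≤ P k) (t : ℝ × ℝ) :
    (countIn P t : ℝ) = ∑ k, (Set.Ioi (P k).1 ×ˢ Set.Ioi (P k).2).indicator 1 t := by
  have nonneg_fst (k : ι) : 0 ≤ (P k).1 := (hP k).1
  have nonneg_snd (k : ι) : 0 ≤ (P k).2 := (hP k).2
  simp [countIn, Set.indicator_apply, nonneg_fst, nonneg_snd]

lemma integral_indicator_Ioi_prod_Ioi {x : ℝ × ℝ} (hx : x ∈ Set.Icc 0 1) :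
    ∫ t in Set.Icc (0 : ℝ × ℝ) 1, (Set.Ioi x.1 ×ˢ Set.Ioi x.2).indicator (1 : ℝ × ℝ → ℝ) t =
      (1 - x.1) * (1 - x.2) := by
  have inter_Ioi {a : ℝ} (ha : 0 ≤ a) : Set.Icc 0 1 ∩ Set.Ioi a = Set.Ioc a 1 := by
    grind
  rw [setIntegral_indicator (measurableSet_Ioi.prod measurableSet_Ioi), Set.Icc_prod_eq,
    Set.prod_inter_prod]
  simp only [Prod.fst_zero, Prod.snd_zero, Prod.fst_one, Prod.snd_one, Pi.one_apply]
  rw [inter_Ioi hx.1.1, inter_Ioi hx.1.2, setIntegral_one_eq_measureReal, Measure.volume_eq_prod,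
    measureReal_prod_prod, Real.volume_real_Ioc_of_le (show x.1 ≤ 1 from hx.2.1),
    Real.volume_real_Ioc_of_le (show x.2 ≤ 1 from hx.2.2)]

lemma integral_fst_mul_snd_unitSquare : ∫ t in Set.Icc (0 : ℝ × ℝ) 1, t.1 * t.2 = 1 / 4 := by
  have integral_unitInterval : ∫ s in Set.Icc (0 : ℝ) 1, s = 1 / 2 := by
    rw [integral_Icc_eq_integral_Ioc, ← intervalIntegral.integral_of_le zero_le_one]
    norm_num
  rw [Set.Icc_prod_eq, Measure.volume_eq_prod]
  refine (setIntegral_prod_mul id id _ _).trans ?_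
  simp only [id, Prod.fst_zero, Prod.snd_zero, Prod.fst_one, Prod.snd_one, integral_unitInterval]
  norm_num

lemma integral_localDisc (hP : ∀ k, P k ∈ Set.Icc 0 1) :
    ∫ t in Set.Icc (0 : ℝ × ℝ) 1, localDisc P t =
      (∑ k, (1 - (P k).1) * (1 - (P k).2)) / Fintype.card ι - 1 / 4 := by
  have integrable_box (k : ι) : IntegrableOn
      ((Set.Ioi (P k).1 ×ˢ Set.Ioi (P k).2).indicator (1 : ℝ × ℝ → ℝ)) (Set.Icc 0 1) :=
    (integrableOn_const isCompact_Icc.measure_ne_top).indicator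
      (measurableSet_Ioi.prod measurableSet_Ioi)
  have integrable_area : IntegrableOn (fun t : ℝ × ℝ => t.1 * t.2) (Set.Icc 0 1) :=
    (continuous_fst.mul continuous_snd).integrableOn_Icc
  simp only [localDisc, countIn_eq_sum_indicator fun k => (hP k).1]
  rw [integral_sub ((integrable_finsetSum _ fun k _ => integrable_box k).div_const _)
      integrable_area, integral_div, integral_finsetSum _ fun k _ => integrable_box k,
    integral_fst_mul_snd_unitSquare]
  simp only [integral_indicator_Ioi_prod_Ioi (hP _)]

end IntegralLocalDisc

section DigitSign

/-- The Rademacher sign `(-1) ^ b` of a binary digit `b`. It turns the shift `⊕` into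
multiplication and makes sums over independent digits orthogonal. -/
noncomputable def digitSign (b : Bool) : ℝ := if b then -1 else 1

lemma bval_eq_one_sub_digitSign_div_two (b : Bool) : bval b = (1 - digitSign b) / 2 := by
  cases b <;> norm_num [bval, digitSign]

lemma digitSign_not (b : Bool) : digitSign (!b) = -digitSign b := by
  cases b <;> norm_num [digitSign]

lemma digitSign_bne (a b : Bool) : digitSign (a != b) = digitSign a * digitSign b := by
  cases a <;> cases b <;> norm_num [digitSign]

lemma digitSign_mul_self (b : Bool) : digitSign b * digitSign b = 1 := by
  cases b <;> norm_num [digitSign]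

lemma sum_digitSign {n : ℕ} (σ : Fin n → Bool) : ∑ i, digitSign (σ i) = 2 * zeroCount σ - n := by
  have sign_eq (b : Bool) : digitSign b = 2 * (if b = false then 1 else 0) - 1 := by
    cases b <;> norm_num [digitSign]
  simp only [sign_eq, Finset.sum_sub_distrib, ← Finset.mul_sum, Finset.sum_boole]
  simp [zeroCount]

variable {ι : Type*} [Fintype ι]

lemma one_sub_sum_bval_div (b : ι → Bool) (d : ι → ℝ) :
    1 - ∑ i, bval (b i) / d i =
      1 - (∑ i, 1 / d i) / 2 + ∑ i, digitSign (b i) * (1 / (2 * d i)) := by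
  rw [Finset.sum_div, sub_add, ← Finset.sum_sub_distrib]
  congr! 2 with i
  rw [bval_eq_one_sub_digitSign_div_two]
  ring

lemma sum_bval_div_mem_Icc {d : ι → ℝ} (hd : ∀ i, 0 ≤ d i) (hsum : ∑ i, 1 / d i ≤ 1)
    (b : ι → Bool) : ∑ i, bval (b i) / d i ∈ Set.Icc 0 1 := by
  have bval_mem (c : Bool) : 0 ≤ bval c ∧ bval c ≤ 1 := by
    cases c <;> simp [bval]
  exact ⟨Finset.sum_nonneg fun i _ => div_nonneg (bval_mem _).1 (hd i),
    (Finset.sum_le_sum fun i _ => div_le_div_of_nonneg_right (bval_mem _).2 (hd i)).trans hsum⟩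

variable [DecidableEq ι]

lemma sum_digitSign_mul_eq_zero (i : ι) (f : (ι → Bool) → ℝ)
    (hf : ∀ t, f (Function.update t i (!t i)) = f t) : ∑ t, digitSign (t i) * f t = 0 := by
  refine Finset.sum_involution (fun t _ => Function.update t i (!t i)) (fun t _ => ?_)
    (fun t _ _ hfix => ?_) (fun t _ => Finset.mem_univ _) (fun t _ => ?_)
  · simp [hf, digitSign_not]
  · simpa using congrFun hfix i
  · simp

lemma sum_digitSign_mul_digitSign (i j : ι) :
    ∑ t : ι → Bool, digitSign (t i) * digitSign (t j) =
      if i = j then 2 ^ Fintype.card ι else 0 := by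
  split_ifs with hij
  · simp [hij, digitSign_mul_self]
  · exact sum_digitSign_mul_eq_zero i (fun t => digitSign (t j)) fun t => by
      rw [Function.update_of_ne (Ne.symm hij)]

lemma sum_affine_digitSign_mul_affine_digitSign (A B : ℝ) (p q : ι → ℝ) :
    ∑ t : ι → Bool,
        (A + ∑ i, digitSign (t i) * p i) * (B + ∑ i, digitSign (t i) * q i) =
      2 ^ Fintype.card ι * (A * B + ∑ i, p i * q i) := by
  have linear_sum (p : ι → ℝ) : ∑ t : ι → Bool, ∑ i, digitSign (t i) * p i = 0 := by
    rw [Finset.sum_comm]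
    exact Finset.sum_eq_zero fun i _ => sum_digitSign_mul_eq_zero i (fun _ => p i) fun _ => rfl
  have quadratic_sum :
      ∑ t : ι → Bool, (∑ i, digitSign (t i) * p i) * ∑ i, digitSign (t i) * q i =
        2 ^ Fintype.card ι * ∑ i, p i * q i := by
    calc
      _ = ∑ i, ∑ j, (∑ t : ι → Bool, digitSign (t i) * digitSign (t j)) * (p i * q j) := by
        simp only [Finset.sum_mul_sum]
        rw [Finset.sum_comm]
        refine Finset.sum_congr rfl fun i _ => ?_
        rw [Finset.sum_comm]
        refine Finset.sum_congr rfl fun j _ => ?_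
        rw [Finset.sum_mul]
        exact Finset.sum_congr rfl fun t _ => mul_mul_mul_comm _ _ _ _
      _ = _ := by simp [sum_digitSign_mul_digitSign, Finset.mul_sum]
  simp only [add_mul, mul_add, Finset.sum_add_distrib, ← Finset.mul_sum, ← Finset.sum_mul,
    linear_sum, quadratic_sum]
  simp [mul_left_comm]

end DigitSign

section Hammersley

lemma sum_one_div_two_pow_succ (n : ℕ) :
    ∑ i : Fin n, (1 : ℝ) / 2 ^ (i.val + 1) = 1 - 1 / 2 ^ n := by
  rw [Fin.sum_univ_eq_sum_range (fun i => (1 : ℝ) / 2 ^ (i + 1))]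
  induction n with
  | zero => simp
  | succ n ih =>
    rw [Finset.sum_range_succ, ih]
    ring

lemma sum_one_div_two_pow_sub (n : ℕ) :
    ∑ i : Fin n, (1 : ℝ) / 2 ^ (n - i.val) = 1 - 1 / 2 ^ n := by
  rw [← sum_one_div_two_pow_succ, ← Equiv.sum_comp Fin.revPerm]
  refine Finset.sum_congr rfl fun i _ => ?_
  rw [Fin.revPerm_apply, Fin.val_rev, Nat.sub_sub_self i.isLt]

variable {n : ℕ} (σ : Fin n → Bool)

lemma hammersleyShifted_mem_Icc (t : Fin n → Bool) : hammersleyShifted n σ t ∈ Set.Icc 0 1 := by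
  have one_sub_le : 1 - 1 / (2 : ℝ) ^ n ≤ 1 := sub_le_self _ (by positivity)
  have fst_mem := sum_bval_div_mem_Icc (fun i : Fin n => by positivity)
    ((sum_one_div_two_pow_sub n).trans_le one_sub_le) t
  have snd_mem := sum_bval_div_mem_Icc (fun i : Fin n => by positivity)
    ((sum_one_div_two_pow_succ n).trans_le one_sub_le) fun i => t i != σ i
  exact ⟨⟨fst_mem.1, snd_mem.1⟩, fst_mem.2, snd_mem.2⟩

lemma one_sub_hammersleyShifted_fst (t : Fin n → Bool) :
    1 - (hammersleyShifted n σ t).1 =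
      (1 + 1 / 2 ^ n) / 2 + ∑ i, digitSign (t i) * (1 / (2 * 2 ^ (n - i.val))) := by
  rw [hammersleyShifted, one_sub_sum_bval_div, sum_one_div_two_pow_sub]
  ring

lemma one_sub_hammersleyShifted_snd (t : Fin n → Bool) :
    1 - (hammersleyShifted n σ t).2 =
      (1 + 1 / 2 ^ n) / 2 +
        ∑ i, digitSign (t i) * (digitSign (σ i) * (1 / (2 * 2 ^ (i.val + 1)))) := by
  rw [hammersleyShifted, one_sub_sum_bval_div, sum_one_div_two_pow_succ]
  simp only [digitSign_bne, mul_assoc]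
  ring

lemma sum_one_sub_fst_mul_one_sub_snd_hammersleyShifted :
    ∑ t, (1 - (hammersleyShifted n σ t).1) * (1 - (hammersleyShifted n σ t).2) =
      2 ^ n * (((1 + 1 / 2 ^ n) / 2) ^ 2 + (2 * zeroCount σ - n) / 2 ^ (n + 3)) := by
  have weight_mul_weight (i : Fin n) :
      1 / (2 * 2 ^ (n - i.val)) * (digitSign (σ i) * (1 / (2 * 2 ^ (i.val + 1)))) =
        digitSign (σ i) / 2 ^ (n + 3) := by
    have pow_split : (2 : ℝ) ^ (n + 3) = 2 * 2 ^ (n - i.val) * (2 * 2 ^ (i.val + 1)) := by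
      rw [mul_mul_mul_comm, ← pow_add, show n - i.val + (i.val + 1) = n + 1 by omega]
      ring
    rw [pow_split]
    field_simp
  simp only [one_sub_hammersleyShifted_fst, one_sub_hammersleyShifted_snd,
    sum_affine_digitSign_mul_affine_digitSign, weight_mul_weight, ← Finset.sum_div, sum_digitSign,
    Fintype.card_fin, sq]

end Hammersley

/-- The Haar coefficient for `j = (-1,-1)`, `m = (0,0)`, i.e. the integral of the
local discrepancy of `R_{n,σ}`, equals `2^{-(n+3)}(2aₙ + 4 - n) + 2^{-2(n+1)}`. -/
theorem statement10 (n : ℕ) (hn : 0 < n) (σ : Fin n → Bool) :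
    haarCoeff (hammersleyShifted n σ) (-1, -1) (0, 0) =
      (2 * (zeroCount σ : ℝ) + 4 - n) / 2 ^ (n + 3) + 1 / 2 ^ (2 * (n + 1)) ∧
    (∫ t in Set.Icc (0 : ℝ × ℝ) 1, localDisc (hammersleyShifted n σ) t) =
      (2 * (zeroCount σ : ℝ) + 4 - n) / 2 ^ (n + 3) + 1 / 2 ^ (2 * (n + 1)) := by
  have integral_eq :
      (∫ t in Set.Icc (0 : ℝ × ℝ) 1, localDisc (hammersleyShifted n σ) t) =
        (2 * (zeroCount σ : ℝ) + 4 - n) / 2 ^ (n + 3) + 1 / 2 ^ (2 * (n + 1)) := by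
    rw [integral_localDisc (hammersleyShifted_mem_Icc σ),
      sum_one_sub_fst_mul_one_sub_snd_hammersleyShifted, Fintype.card_fun, Fintype.card_bool,
      Fintype.card_fin, Nat.cast_pow, Nat.cast_two, mul_div_cancel_left₀ _ (by positivity)]
    field_simp
    ring
  exact ⟨(haarCoeff_neg_one _ _).trans integral_eq, integral_eq⟩
end
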